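/- For every n ≥ 2, the number of up-down permutations σ of length 2n with mmp^{(1,0,∅,0)}(σ) = 2 equals Σ_{k=1}^{n−1} C(2n−1, 2k) · b_{2k−1} · b_{2n−2k−1}, where b_{2m−1} denotes the number of up-down permutations of length 2m−1 and C(·,·) is the binomial coefficient. (Equivalently, A^{(1,0,∅,0)}_{2n}(x)|_{x²} = Σ_{k=1}^{n−1} C(2n−1,2k) B_{2k−1}(1) B_{2n−2k−1}(1).) -/

import Mathlib

/-- A permutation `σ` of `{1,…,n}` (as a permutation of `Fin n`) is up-down if
`σ_1 < σ_2 > σ_3 < σ_4 > ⋯`. -/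
def UpDown {n : ℕ} (σ : Equiv.Perm (Fin n)) : Prop :=
  ∀ i : Fin n, ∀ h : i.val + 1 < n,
    if Even i.val then σ i < σ ⟨i.val + 1, h⟩ else σ ⟨i.val + 1, h⟩ < σ i

/-- A permutation is down-up if `σ_1 > σ_2 < σ_3 > σ_4 < ⋯`. -/
def DownUp {n : ℕ} (σ : Equiv.Perm (Fin n)) : Prop :=
  ∀ i : Fin n, ∀ h : i.val + 1 < n,
    if Even i.val then σ ⟨i.val + 1, h⟩ < σ i else σ i < σ ⟨i.val + 1, h⟩

/-- `σ_i` matches `MMP(1,0,∅,0)`: there exists `j > i` with `σ_j > σ_i` and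
there is no `j < i` with `σ_j < σ_i`. -/
def Matches1 {n : ℕ} (σ : Equiv.Perm (Fin n)) (i : Fin n) : Prop :=
  (∃ j, i < j ∧ σ i < σ j) ∧ ¬ ∃ j, j < i ∧ σ j < σ i

/-- `mmp^{(1,0,∅,0)}(σ)`: the number of indices matching `MMP(1,0,∅,0)` in `σ`. -/
noncomputable def mmp1 {n : ℕ} (σ : Equiv.Perm (Fin n)) : ℕ :=
  {i : Fin n | Matches1 σ i}.ncard

/-- The number of up-down permutations of length `m`. -/
noncomputable def UDcount (m : ℕ) : ℕ := {σ : Equiv.Perm (Fin m) | UpDown σ}.ncard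

/-!
In an up-down permutation of even length the entries matching `MMP(1,0,∅,0)` are exactly the
left-to-right minima. There are two of them precisely when the word has the form `a t b v` with `b`
the smallest letter overall and `a` the smallest letter of `a t`. As `b` is smaller than both of
its neighbours, it stands after an even number `2k` of letters, and deleting `a` and `b`, which
impose no further condition, leaves two arbitrary down-up words `t` and `v` of lengths `2k - 1` and
`2n - 2k - 1`. The letters of `a t` form any of the `C(2n - 1, 2k)` subsets of the letters other
than `b`, and down-up words over any alphabet of size `m` are as many as up-down permutations of
length `m`.
-/

section Alternating

variable {α β : Type*} {r : α → α → Prop}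

/-- The word `w₁ w₂ w₃ …` satisfies `r w₁ w₂`, `r w₃ w₂`, `r w₃ w₄`, …: up-down words are the case
`r = (<)`, down-up words the case `r = (>)`. The relation is swapped at every step so that the
tails of alternating words are again alternating words. -/
def Alternating : (α → α → Prop) → List α → Prop
  | _, [] => True
  | _, [_] => True
  | r, a :: b :: l => r a b ∧ Alternating (Function.swap r) (b :: l)

theorem alternating_map {f : β → α} {l : List β} :
    Alternating r (l.map f) ↔ Alternating (fun x y => r (f x) (f y)) l := by
  induction l generalizing r with
  | nil => simp only [List.map_nil, Alternating]
  | cons a l ih =>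
    cases l with
    | nil => simp only [List.map_cons, List.map_nil, Alternating]
    | cons b l => exact and_congr_right fun _ => ih

theorem alternating_iff_getElem {l : List α} :
    Alternating r l ↔ ∀ i (h : i + 1 < l.length),
      if Even i then r l[i] l[i + 1] else r l[i + 1] l[i] := by
  induction l generalizing r with
  | nil => simp [Alternating]
  | cons a l ih =>
    cases l with
    | nil => simp [Alternating]
    | cons b l =>
      rw [Alternating, ih]
      refine ⟨fun h i hi => ?_, fun h => ⟨by simpa using h 0, fun i hi => ?_⟩⟩
      · cases i with
        | zero => simpa using h.1
        | succ i => grind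
      · grind

theorem alternating_cons_iff_of_forall {b : α} {l : List α} (h : ∀ x ∈ l, r b x) :
    Alternating r (b :: l) ↔ Alternating (Function.swap r) l := by
  cases l with
  | nil => simp only [Alternating]
  | cons x l => exact and_iff_right (h x List.mem_cons_self)

theorem alternating_append_cons_iff_of_forall [Std.Asymm r] {b : α} {u v : List α}
    (hu : ∀ x ∈ u, r b x) (hv : ∀ x ∈ v, r b x) :
    Alternating r (u ++ b :: v) ↔
      Even u.length ∧ Alternating r u ∧ Alternating (Function.swap r) v := by
  match u with
  | [] => simp [Alternating, alternating_cons_iff_of_forall hv]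
  | [x] =>
    have hbx : r b x := hu x (by simp)
    simp [Alternating, Std.Asymm.asymm b x hbx]
  | [x, y] =>
    have hby : r b y := hu y (by simp)
    simp [Alternating, hby, alternating_cons_iff_of_forall hv]
  | x :: y :: z :: u =>
    have ih := alternating_append_cons_iff_of_forall (u := z :: u) (by grind) hv
    grind [Alternating]

theorem upDown_iff_alternating_ofFn {n : ℕ} {σ : Equiv.Perm (Fin n)} :
    UpDown σ ↔ Alternating (· < ·) (List.ofFn σ) := by
  simp only [alternating_iff_getElem, List.getElem_ofFn, List.length_ofFn]
  exact ⟨fun h i hi => h ⟨i, by lia⟩ hi, fun h i hi => h i hi⟩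

end Alternating

section Words

variable {α : Type*}

/-- The words in which every letter of `S` occurs exactly once and no other letter occurs. -/
noncomputable def words [DecidableEq α] (S : Finset α) : Finset (List α) :=
  S.toList.permutations.toFinset

theorem mem_words_iff_perm [DecidableEq α] {S : Finset α} {w : List α} :
    w ∈ words S ↔ w.Perm S.toList := by
  rw [words, List.mem_toFinset, List.mem_permutations]

theorem mem_words [DecidableEq α] {S : Finset α} {w : List α} :
    w ∈ words S ↔ w.Nodup ∧ ∀ x, x ∈ w ↔ x ∈ S := by
  rw [mem_words_iff_perm]
  refine ⟨fun h => ⟨h.nodup_iff.mpr S.nodup_toList, fun x => ?_⟩, fun h => ?_⟩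
  · rw [h.mem_iff, Finset.mem_toList]
  · rw [List.perm_ext_iff_of_nodup h.1 S.nodup_toList]
    simpa only [Finset.mem_toList] using h.2

theorem length_of_mem_words [DecidableEq α] {S : Finset α} {w : List α} (hw : w ∈ words S) :
    w.length = S.card := by
  rw [(mem_words_iff_perm.mp hw).length_eq, Finset.length_toList]

theorem range_ofFn_comp_perm [DecidableEq α] {m : ℕ} (f : Fin m ↪ α) :
    Set.range (fun σ : Equiv.Perm (Fin m) => List.ofFn (f ∘ σ)) =
      words (Finset.univ.map f) := by
  ext w
  rw [Finset.mem_coe]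
  constructor
  · rintro ⟨σ, rfl⟩
    refine mem_words.mpr ⟨List.nodup_ofFn.mpr (f.injective.comp σ.injective), fun x => ?_⟩
    simp only [List.mem_ofFn, Function.comp_apply, Finset.mem_map, Finset.mem_univ, true_and]
    exact (σ.surjective.exists (p := fun j => f j = x)).symm
  · intro hw
    have hlen : w.length = m := by simpa using length_of_mem_words hw
    obtain ⟨hnodup, hmem⟩ := mem_words.mp hw
    have hpre (i : Fin m) : ∃ j, f j = w[i] := by
      simpa only [Finset.mem_map, Finset.mem_univ, true_and] using
        (hmem w[i]).mp (List.getElem_mem _)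
    choose g hg using hpre
    have hg_inj : Function.Injective g := fun i j hij => by
      have hw_eq : w[i] = w[j] := by rw [← hg, ← hg, hij]
      exact Fin.ext ((hnodup.getElem_inj_iff).mp hw_eq)
    refine ⟨Equiv.ofBijective g (Finite.injective_iff_bijective.mp hg_inj), ?_⟩
    exact List.ext_getElem (by simp [hlen]) fun i _ _ => by simp [hg]

theorem ncard_setOf_ofFn_comp_perm [DecidableEq α] {m : ℕ} (f : Fin m ↪ α) (P : List α → Prop)
    [DecidablePred P] :
    {σ : Equiv.Perm (Fin m) | P (List.ofFn (f ∘ σ))}.ncard =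
      {w ∈ words (Finset.univ.map f) | P w}.card := by
  have hinj : Function.Injective fun σ : Equiv.Perm (Fin m) => List.ofFn (f ∘ σ) :=
    fun σ τ h => Equiv.coe_fn_injective (f.injective.comp_left (List.ofFn_injective h))
  rw [← Set.ncard_image_of_injective _ hinj, ← Set.ncard_coe_finset, Finset.coe_filter]
  simp_rw [← Finset.mem_coe, ← range_ofFn_comp_perm]
  congr 1
  grind

theorem exists_eq_append_cons_iff_exists_take {w : List α} {b : α} {P : List α → Prop} :
    (∃ u v, w = u ++ b :: v ∧ P u) ↔ ∃ i, ∃ h : i < w.length, w[i] = b ∧ P (w.take i) := by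
  constructor
  · rintro ⟨u, v, rfl, hu⟩
    exact ⟨u.length, by simp, by simp, by simpa using hu⟩
  · rintro ⟨i, hi, rfl, hP⟩
    exact ⟨w.take i, w.drop (i + 1), by simp, hP⟩

theorem append_cons_mem_words_insert_iff [DecidableEq α] {T : Finset α} {b : α} (hb : b ∉ T)
    {u v : List α} :
    u ++ b :: v ∈ words (insert b T) ↔ ∃ S ⊆ T, u ∈ words S ∧ v ∈ words (T \ S) := by
  simp only [mem_words, List.nodup_append, List.nodup_cons, List.mem_append, List.mem_cons,
    Finset.mem_insert, Finset.mem_sdiff]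
  constructor
  · intro h
    exact ⟨u.toFinset, by grind [List.mem_toFinset]⟩
  · grind

open scoped Classical in
theorem card_words_insert_append_cons [DecidableEq α] {T : Finset α} {b : α} (hb : b ∉ T)
    (m : ℕ) (P Q : List α → Prop) [DecidablePred P] [DecidablePred Q] :
    {w ∈ words (insert b T) | ∃ u v, w = u ++ b :: v ∧ u.length = m ∧ P u ∧ Q v}.card =
      ∑ S ∈ T.powersetCard m, {u ∈ words S | P u}.card * {v ∈ words (T \ S) | Q v}.card := by
  simp_rw [← Finset.card_product, ← Finset.card_sigma]
  symm
  refine Finset.card_nbij (fun x => x.2.1 ++ b :: x.2.2) ?_ ?_ ?_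
  · rintro ⟨S, u, v⟩ h
    simp only [Finset.coe_sigma, Finset.mem_coe, Set.mem_sigma_iff, Finset.mem_powersetCard,
      Finset.mem_product, Finset.mem_filter] at h ⊢
    obtain ⟨⟨hST, hSm⟩, ⟨hu, hPu⟩, hv, hQv⟩ := h
    exact ⟨(append_cons_mem_words_insert_iff hb).mpr ⟨S, hST, hu, hv⟩, u, v, rfl,
      (length_of_mem_words hu).trans hSm, hPu, hQv⟩
  · rintro ⟨S, u, v⟩ h ⟨S', u', v'⟩ h' heq
    simp only [Finset.coe_sigma, Finset.mem_coe, Set.mem_sigma_iff, Finset.mem_powersetCard,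
      Finset.mem_product, Finset.mem_filter] at h h'
    have hlen : u.length = u'.length := by
      rw [length_of_mem_words h.2.1.1, length_of_mem_words h'.2.1.1, h.1.2, h'.1.2]
    obtain ⟨rfl, hbv⟩ := List.append_inj heq hlen
    obtain rfl : v = v' := List.tail_eq_of_cons_eq hbv
    obtain rfl : S = S' := by
      ext x
      rw [← (mem_words.mp h.2.1.1).2, ← (mem_words.mp h'.2.1.1).2]
    rfl
  · intro w hw
    simp only [Finset.coe_filter, Set.mem_ofPred_eq] at hw
    obtain ⟨hw, u, v, rfl, hm, hPu, hQv⟩ := hw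
    obtain ⟨S, hST, hu, hv⟩ := (append_cons_mem_words_insert_iff hb).mp hw
    refine ⟨⟨S, u, v⟩, ?_, rfl⟩
    simp only [Finset.coe_sigma, Finset.mem_coe, Set.mem_sigma_iff, Finset.mem_powersetCard,
      Finset.mem_product, Finset.mem_filter]
    exact ⟨⟨hST, (length_of_mem_words hu).symm.trans hm⟩, ⟨hu, hPu⟩, hv, hQv⟩

open scoped Classical in
theorem card_alternating_gt_words [LinearOrder α] (S : Finset α) :
    {w ∈ words S | Alternating (· > ·) w}.card = UDcount S.card := by
  -- Listing `S` in decreasing order turns up-down permutations into down-up words over `S`.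
  let f : Fin S.card ↪ α := Fin.revPerm.toEmbedding.trans (S.orderEmbOfFin rfl).toEmbedding
  have hf : Finset.univ.map f = S := by
    simp [f, ← Finset.map_map]
  have hanti (σ : Equiv.Perm (Fin S.card)) :
      Alternating (· > ·) (List.ofFn (f ∘ σ)) ↔ UpDown σ := by
    rw [upDown_iff_alternating_ofFn, ← List.map_ofFn, alternating_map]
    simp [f]
  rw [UDcount]
  simp_rw [← hanti]
  rw [ncard_setOf_ofFn_comp_perm f (Alternating (· > ·)), hf]

end Words

section LeftToRightMin

/-- The left-to-right minima of `f`: positions whose value is smaller than every earlier one. -/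
def IsLeftToRightMin {ι α : Type*} [LT ι] [LT α] (f : ι → α) (i : ι) : Prop :=
  ∀ j < i, f i < f j

variable {ι α : Type*} [LinearOrder ι] [WellFoundedLT ι] [LinearOrder α] {f : ι → α}

theorem exists_isLeftToRightMin_le (f : ι → α) (i : ι) :
    ∃ l ≤ i, IsLeftToRightMin f l ∧ f l ≤ f i := by
  induction i using WellFoundedLT.induction with
  | ind i ih =>
    by_cases hi : IsLeftToRightMin f i
    · exact ⟨i, le_rfl, hi, le_rfl⟩
    · simp only [IsLeftToRightMin, not_forall, not_lt] at hi
      obtain ⟨j, hji, hj⟩ := hi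
      obtain ⟨l, hlj, hl, hfl⟩ := ih j hji
      exact ⟨l, hlj.trans hji.le, hl, hfl.trans hj⟩

theorem ncard_isLeftToRightMin_eq_two_iff [OrderBot ι] :
    {i | IsLeftToRightMin f i}.ncard = 2 ↔
      ∃ p ≠ ⊥, IsLeftToRightMin f p ∧ (∀ j, f p ≤ f j) ∧ ∀ j < p, f ⊥ ≤ f j := by
  have hbot : IsLeftToRightMin f ⊥ := fun j hj => absurd hj not_lt_bot
  constructor
  · intro hcard
    obtain ⟨p, hp_ne, hp⟩ : ∃ p ≠ ⊥, {i | IsLeftToRightMin f i} = {⊥, p} := by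
      obtain ⟨x, y, hxy, hset⟩ := Set.ncard_eq_two.mp hcard
      have hmem : (⊥ : ι) ∈ ({x, y} : Set ι) := hset ▸ hbot
      rcases hmem with rfl | rfl
      · exact ⟨y, hxy.symm, hset⟩
      · exact ⟨x, hxy, hset.trans (Set.pair_comm _ _)⟩
    have hmin (i : ι) : IsLeftToRightMin f i ↔ i = ⊥ ∨ i = p := Set.ext_iff.mp hp i
    have hp_min : IsLeftToRightMin f p := (hmin p).mpr (.inr rfl)
    refine ⟨p, hp_ne, hp_min, fun j => ?_, fun j hj => ?_⟩ <;>
      obtain ⟨l, hlj, hl, hfl⟩ := exists_isLeftToRightMin_le f j <;>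
      rcases (hmin l).mp hl with rfl | rfl
    · exact (hp_min ⊥ (bot_lt_iff_ne_bot.mpr hp_ne)).le.trans hfl
    · exact hfl
    · exact hfl
    · exact absurd hj hlj.not_gt
  · rintro ⟨p, hp_ne, hp_min, hp_le, hbot_le⟩
    have hset : {i | IsLeftToRightMin f i} = {⊥, p} := by
      ext i
      refine ⟨fun hi => ?_, by rintro (rfl | rfl) <;> assumption⟩
      by_contra! hne
      simp only [Set.mem_insert_iff, Set.mem_singleton_iff, not_or] at hne
      rcases lt_or_gt_of_ne hne.2 with hip | hpi
      · exact (hi ⊥ (bot_lt_iff_ne_bot.mpr hne.1)).not_ge (hbot_le i hip)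
      · exact (hi p hpi).not_ge (hp_le i)
    rw [hset, Set.ncard_pair hp_ne.symm]

/-- An up-down permutation of even length has an ascent at every even position, while no odd
position is a left-to-right minimum. -/
theorem matches1_iff_isLeftToRightMin {n : ℕ} (hn : Even n) {σ : Equiv.Perm (Fin n)}
    (hσ : UpDown σ) {i : Fin n} : Matches1 σ i ↔ IsLeftToRightMin σ i := by
  have hmin : (¬ ∃ j, j < i ∧ σ j < σ i) ↔ IsLeftToRightMin σ i := by
    simp only [not_exists, not_and, not_lt]
    exact forall₂_congr fun j hj => (σ.injective.ne hj.ne').le_iff_lt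
  rw [Matches1, hmin, and_iff_right_iff_imp]
  intro hi
  have hi_even : Even i.val := by
    by_contra hodd
    have hpos : 0 < i.val := (Nat.not_even_iff_odd.mp hodd).pos
    have hasc := hσ ⟨i - 1, by lia⟩ (by grind)
    rw [if_pos (by grind)] at hasc
    simp only [Nat.sub_add_cancel hpos] at hasc
    exact hasc.not_gt (hi _ (Fin.lt_def.mpr (by grind)))
  have hsucc : i.val + 1 < n := by grind
  have hasc := hσ i hsucc
  rw [if_pos hi_even] at hasc
  exact ⟨_, Fin.lt_def.mpr (Nat.lt_succ_self _), hasc⟩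

end LeftToRightMin

section HeadIsMin

variable {α : Type*}

/-- The first letter of the nonempty word `l` is a smallest one, i.e. it is the only left-to-right
minimum of `l` when the letters are distinct. -/
def HeadIsMin [LE α] (l : List α) : Prop :=
  ∃ a ∈ l.head?, ∀ x ∈ l, a ≤ x

theorem headIsMin_take_ofFn_iff [Preorder α] {n : ℕ} [NeZero n] {f : Fin n → α} {p : Fin n} :
    HeadIsMin ((List.ofFn f).take p) ↔ p ≠ 0 ∧ ∀ j < p, f 0 ≤ f j := by
  have hmem (x : α) : x ∈ (List.ofFn f).take p ↔ ∃ j < p, f j = x := by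
    simp only [List.mem_take_iff_getElem, List.getElem_ofFn, List.length_ofFn]
    exact ⟨fun ⟨j, hj, hx⟩ => ⟨⟨j, by lia⟩, by grind, hx⟩, fun ⟨j, hj, hx⟩ => ⟨j, by grind, hx⟩⟩
  have hhead (a : α) : a ∈ ((List.ofFn f).take p).head? ↔ p ≠ 0 ∧ f 0 = a := by
    have h0 : (List.ofFn f).head? = some (f 0) := by
      rw [List.head?_eq_getElem?, List.getElem?_ofFn, dif_pos (NeZero.pos n)]
      rfl
    rw [List.head?_take, h0, ← Fin.val_ne_zero_iff]
    grind
  simp only [HeadIsMin, hmem, hhead]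
  grind

theorem mmp1_eq_two_iff {n : ℕ} [NeZero n] (hn : Even n) {σ : Equiv.Perm (Fin n)}
    (hσ : UpDown σ) :
    mmp1 σ = 2 ↔ ∃ u v, List.ofFn σ = u ++ 0 :: v ∧ HeadIsMin u := by
  have hmin (p : Fin n) :
      (IsLeftToRightMin σ p ∧ ∀ j, σ p ≤ σ j) ↔ σ p = 0 := by
    refine ⟨fun h => ?_, fun h => ⟨fun j hj => ?_, fun j => by simp [h]⟩⟩
    · simpa using h.2 (σ.symm 0)
    · rw [h, Fin.pos_iff_ne_zero, ← h]
      exact σ.injective.ne hj.ne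
  simp only [mmp1, matches1_iff_isLeftToRightMin hn hσ, ncard_isLeftToRightMin_eq_two_iff,
    exists_eq_append_cons_iff_exists_take, List.length_ofFn, List.getElem_ofFn]
  rw [Fin.exists_iff]
  refine exists₂_congr fun i hi => ?_
  rw [bot_eq_zero, headIsMin_take_ofFn_iff (p := ⟨i, hi⟩), ← hmin]
  tauto

end HeadIsMin

section Counting

variable {α : Type*}

open scoped Classical in
theorem card_alternating_lt_headIsMin_words [LinearOrder α] {S : Finset α} (hS : S.Nonempty) :
    {w ∈ words S | Alternating (· < ·) w ∧ HeadIsMin w}.card = UDcount (S.card - 1) := by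
  let a := S.min' hS
  have ha : a ∈ S := S.min'_mem hS
  have hle : ∀ x ∈ S, a ≤ x := fun x hx => S.min'_le x hx
  rw [← Finset.card_erase_of_mem ha, ← card_alternating_gt_words]
  symm
  have hcons (t : List α) (ht : ∀ x ∈ t, a < x) :
      (Alternating (· < ·) (a :: t) ∧ HeadIsMin (a :: t)) ↔ Alternating (· > ·) t := by
    rw [alternating_cons_iff_of_forall ht, and_iff_left]
    exact ⟨a, rfl, by grind⟩
  refine Finset.card_nbij (a :: ·) (fun t ht => ?_) (by simp [Set.InjOn]) (fun w hw => ?_)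
  · simp only [Finset.coe_filter, Set.mem_ofPred_eq, mem_words] at ht ⊢
    exact ⟨by grind, (hcons t (by grind)).mpr ht.2⟩
  · simp only [Finset.coe_filter, Set.mem_ofPred_eq, mem_words] at hw
    obtain ⟨hw, hw_alt, c, hc, hc_min⟩ := hw
    obtain ⟨t, rfl⟩ := List.head?_eq_some_iff.mp hc
    obtain rfl : a = c := le_antisymm (hle c (by grind)) (hc_min a (by grind))
    refine ⟨t, ?_, rfl⟩
    simp only [Finset.coe_filter, Set.mem_ofPred_eq, mem_words]
    exact ⟨by grind, (hcons t (by grind)).mp ⟨hw_alt, a, hc, hc_min⟩⟩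

open scoped Classical in
theorem card_alternating_words_insert_of_length [LinearOrder α] {T : Finset α} {b : α}
    (hb : b ∉ T) {m : ℕ} (hm : 0 < m) :
    {w ∈ words (insert b T) | ∃ u v, w = u ++ b :: v ∧ u.length = m ∧
        (Alternating (· < ·) u ∧ HeadIsMin u) ∧ Alternating (· > ·) v}.card =
      T.card.choose m * UDcount (m - 1) * UDcount (T.card - m) := by
  have hcard : ∀ S ∈ T.powersetCard m,
      {u ∈ words S | Alternating (· < ·) u ∧ HeadIsMin u}.card *
        {v ∈ words (T \ S) | Alternating (· > ·) v}.card =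
      UDcount (m - 1) * UDcount (T.card - m) := by
    intro S hS
    obtain ⟨hST, rfl⟩ := Finset.mem_powersetCard.mp hS
    rw [card_alternating_lt_headIsMin_words (Finset.card_pos.mp hm), card_alternating_gt_words,
      Finset.card_sdiff_of_subset hST]
  rw [card_words_insert_append_cons hb, Finset.sum_congr rfl hcard, Finset.sum_const,
    Finset.card_powersetCard, smul_eq_mul, mul_assoc]

theorem alternating_and_exists_headIsMin_iff [LinearOrder α] {T : Finset α} {b : α}
    (hb : ∀ x ∈ T, b < x) {w : List α} (hw : w ∈ words (insert b T)) :
    (Alternating (· < ·) w ∧ ∃ u v, w = u ++ b :: v ∧ HeadIsMin u) ↔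
      ∃ k ∈ Finset.Icc 1 (T.card / 2), ∃ u v, w = u ++ b :: v ∧ u.length = 2 * k ∧
        (Alternating (· < ·) u ∧ HeadIsMin u) ∧ Alternating (· > ·) v := by
  have hbT : b ∉ T := fun h => (hb b h).false
  have halt {u v : List α} (huv : w = u ++ b :: v) : Alternating (· < ·) w ↔
      Even u.length ∧ Alternating (· < ·) u ∧ Alternating (· > ·) v := by
    subst huv
    obtain ⟨S, hST, hu, hv⟩ := (append_cons_mem_words_insert_iff hbT).mp hw
    apply alternating_append_cons_iff_of_forall <;> grind [mem_words]
  constructor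
  · rintro ⟨hw_alt, u, v, huv, hu_min⟩
    obtain ⟨⟨k, hk⟩, hu, hv⟩ := (halt huv).mp hw_alt
    have hu_ne : u.length ≠ 0 := by grind [HeadIsMin]
    have hlen : w.length = T.card + 1 := by
      rw [length_of_mem_words hw, Finset.card_insert_of_notMem hbT]
    exact ⟨k, by grind, u, v, huv, by lia, ⟨hu, hu_min⟩, hv⟩
  · rintro ⟨k, -, u, v, huv, hk, ⟨hu, hu_min⟩, hv⟩
    exact ⟨(halt huv).mpr ⟨hk ▸ even_two_mul k, hu, hv⟩, u, v, huv, hu_min⟩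

open scoped Classical in
theorem card_alternating_lt_words_insert [LinearOrder α] {T : Finset α} {b : α}
    (hb : ∀ x ∈ T, b < x) :
    {w ∈ words (insert b T) |
        Alternating (· < ·) w ∧ ∃ u v, w = u ++ b :: v ∧ HeadIsMin u}.card =
      ∑ k ∈ Finset.Icc 1 (T.card / 2),
        T.card.choose (2 * k) * UDcount (2 * k - 1) * UDcount (T.card - 2 * k) := by
  have hbT : b ∉ T := fun h => (hb b h).false
  have hunion : {w ∈ words (insert b T) |
        Alternating (· < ·) w ∧ ∃ u v, w = u ++ b :: v ∧ HeadIsMin u} =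
      (Finset.Icc 1 (T.card / 2)).biUnion fun k => {w ∈ words (insert b T) | ∃ u v,
        w = u ++ b :: v ∧ u.length = 2 * k ∧
          (Alternating (· < ·) u ∧ HeadIsMin u) ∧ Alternating (· > ·) v} := by
    ext w
    simp only [Finset.mem_filter, Finset.mem_biUnion]
    rw [and_congr_right (alternating_and_exists_headIsMin_iff hb)]
    tauto
  rw [hunion, Finset.card_biUnion]
  · refine Finset.sum_congr rfl fun k hk => ?_
    have hk_pos : 0 < 2 * k := by grind
    exact card_alternating_words_insert_of_length hbT hk_pos
  · intro k _ l _ hkl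
    rw [Function.onFun, Finset.disjoint_filter]
    rintro w hw ⟨u, v, rfl, hu, -⟩ ⟨u', v', heq, hu', -⟩
    have hnodup : (u' ++ b :: v').Nodup := heq ▸ (mem_words.mp hw).1
    have huu' : u = u' :=
      ((List.append_cons_inj_of_notMem (by grind) (by grind)).mp heq).1
    exact hkl (by grind)

end Counting

theorem stmt17 (n : ℕ) (hn : 2 ≤ n) :
    {σ : Equiv.Perm (Fin (2*n)) | UpDown σ ∧ mmp1 σ = 2}.ncard
      = ∑ k ∈ Finset.Icc 1 (n-1),
          (2*n - 1).choose (2*k) * UDcount (2*k - 1) * UDcount (2*n - 2*k - 1) := by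
  classical
  have : NeZero (2 * n) := ⟨by lia⟩
  let T : Finset (Fin (2 * n)) := Finset.univ.erase 0
  have hT : insert 0 T = Finset.univ := Finset.insert_erase (Finset.mem_univ 0)
  have hT_card : T.card = 2 * n - 1 := by simp [T]
  have hT_pos : ∀ x ∈ T, 0 < x := fun x hx => Fin.pos_iff_ne_zero.mpr (Finset.ne_of_mem_erase hx)
  calc {σ : Equiv.Perm (Fin (2 * n)) | UpDown σ ∧ mmp1 σ = 2}.ncard
    _ = {σ : Equiv.Perm (Fin (2 * n)) | Alternating (· < ·) (List.ofFn σ) ∧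
          ∃ u v, List.ofFn σ = u ++ 0 :: v ∧ HeadIsMin u}.ncard := by
      simp_rw [← upDown_iff_alternating_ofFn]
      congr! 3 with σ
      exact and_congr_right (mmp1_eq_two_iff (even_two_mul n))
    _ = {w ∈ words (insert 0 T) | Alternating (· < ·) w ∧
          ∃ u v, w = u ++ 0 :: v ∧ HeadIsMin u}.card := by
      rw [hT, ← Finset.map_refl (s := Finset.univ)]
      exact ncard_setOf_ofFn_comp_perm (Function.Embedding.refl _) fun w =>
        Alternating (· < ·) w ∧ ∃ u v, w = u ++ (0 : Fin (2 * n)) :: v ∧ HeadIsMin u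
    _ = _ := by
      rw [card_alternating_lt_words_insert hT_pos, hT_card]
      refine Finset.sum_congr (by grind) fun k _ => ?_
      rw [Nat.sub_right_comm]
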